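/- Let 𝔥 be a separable complex Hilbert space of dimension greater than two and let d be a tracially bounded decoherence functional for 𝔥, with associated functional β on K(𝔥) • K(𝔥) and representing families {𝔛ᵢ}, {𝔜ᵢ} of trace class operators with β(S) = Σᵢ tr(S(𝔛ᵢ ⊗ 𝔛ᵢ* − 𝔜ᵢ ⊗ 𝔜ᵢ*)) for S ∈ K(𝔥) • K(𝔥). Then there exists a constant C such that |Σᵢ ⟨(𝔛ᵢ ⊗ 𝔛ᵢ* − 𝔜ᵢ ⊗ 𝔜ᵢ*)ξ, η⟩| ≤ C‖ξ‖‖η‖ for all ξ, η in the algebraic tensor product 𝔥 ⊗_alg 𝔥; consequently there is a bounded linear operator 𝔐 on 𝔥 ⊗ 𝔥 with ⟨𝔐ξ, η⟩ = Σᵢ ⟨(𝔛ᵢ ⊗ 𝔛ᵢ* − 𝔜ᵢ ⊗ 𝔜ᵢ*)ξ, η⟩ for all such ξ, η. -/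

import Mathlib

/- Common background definitions: decoherence functionals on the projection
lattice of a complex Hilbert space, boundedness/additivity notions, trace class
operators, and an axiomatisation of the Hilbert space tensor product
`𝔥 ⊗ 𝔥` together with the operator tensor product. -/

noncomputable section

open scoped ComplexInnerProductSpace ComplexOrder
open ContinuousLinearMap

universe u

variable {E : Type u} [NormedAddCommGroup E] [InnerProductSpace ℂ E] [CompleteSpace E]
variable {G : Type u} [NormedAddCommGroup G] [InnerProductSpace ℂ G] [CompleteSpace G]

/-- `p` is an orthogonal projection on a Hilbert space. -/
def IsOrthoProj (p : E →L[ℂ] E) : Prop :=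
  IsIdempotentElem p ∧ IsSelfAdjoint p

/-- `p` is an operator of finite rank. -/
def HasFiniteRank (p : E →L[ℂ] E) : Prop :=
  FiniteDimensional ℂ ↥(LinearMap.range (p : E →ₗ[ℂ] E))

/-- A decoherence functional on the lattice of projections `P(𝔥)`
(modelled as a function on all pairs of bounded operators whose defining
properties refer only to its values at pairs of orthogonal projections). -/
structure IsDecoherenceFunctional (d : (E →L[ℂ] E) → (E →L[ℂ] E) → ℂ) : Prop where
  hermitian : ∀ p q, IsOrthoProj p → IsOrthoProj q → d p q = starRingEnd ℂ (d q p)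
  pos : ∀ p, IsOrthoProj p → 0 ≤ d p p
  normalized : d 1 1 = 1
  orthoadd : ∀ p₁ p₂ q, IsOrthoProj p₁ → IsOrthoProj p₂ → IsOrthoProj q →
    p₁ * p₂ = 0 → d (p₁ + p₂) q = d p₁ q + d p₂ q

/-- A decoherence functional is bounded if `{|d(p,q)|}` is a bounded set. -/
def DFBounded (d : (E →L[ℂ] E) → (E →L[ℂ] E) → ℂ) : Prop :=
  ∃ C : ℝ, ∀ p q, IsOrthoProj p → IsOrthoProj q → ‖d p q‖ ≤ C

/-- Countable additivity of a decoherence functional: for every countable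
pairwise orthogonal family of projections summing (strongly) to `P`,
`d (P, q) = ∑ d (pᵢ, q)`. -/
def DFCountablyAdditive (d : (E →L[ℂ] E) → (E →L[ℂ] E) → ℂ) : Prop :=
  ∀ (p : ℕ → E →L[ℂ] E) (P q : E →L[ℂ] E),
    (∀ i, IsOrthoProj (p i)) → IsOrthoProj P → IsOrthoProj q →
    (∀ i j, i ≠ j → p i * p j = 0) →
    (∀ x : E, HasSum (fun i => p i x) (P x)) →
    HasSum (fun i => d (p i) q) (d P q)

/-- Complete additivity of a decoherence functional. -/
def DFCompletelyAdditive (d : (E →L[ℂ] E) → (E →L[ℂ] E) → ℂ) : Prop :=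
  ∀ (ι : Type u) (p : ι → E →L[ℂ] E) (P q : E →L[ℂ] E),
    (∀ i, IsOrthoProj (p i)) → IsOrthoProj P → IsOrthoProj q →
    (∀ i j, i ≠ j → p i * p j = 0) →
    (∀ x : E, HasSum (fun i => p i x) (P x)) →
    HasSum (fun i => d (p i) q) (d P q)

/-- A bilinear form `D` on `B(𝔥) × B(𝔥)` is bounded. -/
def IsBoundedBilinear (D : (E →L[ℂ] E) →ₗ[ℂ] (E →L[ℂ] E) →ₗ[ℂ] ℂ) : Prop :=
  ∃ C : ℝ, ∀ x y : E →L[ℂ] E, ‖D x y‖ ≤ C * ‖x‖ * ‖y‖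

/-- The bilinear form `D` extends the decoherence functional `d`. -/
def ExtendsDF (D : (E →L[ℂ] E) →ₗ[ℂ] (E →L[ℂ] E) →ₗ[ℂ] ℂ)
    (d : (E →L[ℂ] E) → (E →L[ℂ] E) → ℂ) : Prop :=
  ∀ p q, IsOrthoProj p → IsOrthoProj q → D p q = d p q

/-- `T` is a trace class operator (via the standard characterisation: the sums
`∑ |⟪eᵢ, T fᵢ⟫|` over finite orthonormal families are uniformly bounded). -/
def IsTraceClass (T : E →L[ℂ] E) : Prop :=
  ∃ C : ℝ, ∀ (n : ℕ) (e f : Fin n → E), Orthonormal ℂ e → Orthonormal ℂ f →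
    ∑ i, ‖⟪e i, T (f i)⟫‖ ≤ C

/-- The trace of an operator computed in the Hilbert basis `b` (for a trace
class operator this is basis independent and is the usual trace). -/
def traceAlong {ι : Type*} (b : HilbertBasis ι ℂ E) (T : E →L[ℂ] E) : ℂ :=
  ∑' i, ⟪b i, T (b i)⟫

/-- The rank one orthogonal projection `p_ξ` onto the span of a unit vector `ξ`. -/
def rankOneProj (ξ : E) : E →L[ℂ] E :=
  (innerSL ℂ ξ).smulRight ξ

/-- An axiomatisation of the Hilbert space tensor product `G = E ⊗ E`:
a bilinear map `tmul` into `G` multiplying inner products and having dense span. -/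
structure HilbertTensorProduct (E G : Type u) [NormedAddCommGroup E]
    [InnerProductSpace ℂ E] [NormedAddCommGroup G] [InnerProductSpace ℂ G] :
    Type u where
  tmul : E →ₗ[ℂ] E →ₗ[ℂ] G
  inner_tmul : ∀ a b c d : E, ⟪tmul a b, tmul c d⟫ = ⟪a, c⟫ * ⟪b, d⟫
  dense_span : Dense (↑(Submodule.span ℂ (Set.range fun z : E × E => tmul z.1 z.2)) : Set G)

/-- The algebraic tensor product `E ⊗_alg E`, viewed as a (dense) subspace of `G`. -/
def HilbertTensorProduct.algSpan (J : HilbertTensorProduct E G) : Submodule ℂ G :=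
  Submodule.span ℂ (Set.range fun z : E × E => J.tmul z.1 z.2)

/-- The Hilbert space tensor product together with the operator tensor product
`(x, y) ↦ x ⊗ y` on bounded operators. -/
structure OperatorTensor (E G : Type u) [NormedAddCommGroup E]
    [InnerProductSpace ℂ E] [NormedAddCommGroup G] [InnerProductSpace ℂ G]
    extends HilbertTensorProduct E G where
  op : (E →L[ℂ] E) → (E →L[ℂ] E) → (G →L[ℂ] G)
  op_tmul : ∀ (x y : E →L[ℂ] E) (a b : E), op x y (tmul a b) = tmul (x a) (y b)

/-- The algebraic tensor product `K(𝔥) • K(𝔥)`: the span in `B(G)` of the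
operators `x ⊗ y` with `x, y` compact. -/
def OperatorTensor.compactSpan (J : OperatorTensor E G) : Submodule ℂ (G →L[ℂ] G) :=
  Submodule.span ℂ {T | ∃ x y : E →L[ℂ] E,
    IsCompactOperator (⇑x) ∧ IsCompactOperator (⇑y) ∧ T = J.op x y}

/-- `β` is the linear functional on `K(𝔥) • K(𝔥)` induced by the bilinear form
`D`, i.e. `β (x ⊗ y) = D (x, y)` for compact `x, y`. -/
def IsBetaFor (J : OperatorTensor E G)
    (D : (E →L[ℂ] E) →ₗ[ℂ] (E →L[ℂ] E) →ₗ[ℂ] ℂ)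
    (β : ↥J.compactSpan →ₗ[ℂ] ℂ) : Prop :=
  ∀ x y : E →L[ℂ] E, IsCompactOperator (⇑x) → IsCompactOperator (⇑y) →
    ∀ hm : J.op x y ∈ J.compactSpan, β ⟨J.op x y, hm⟩ = D x y

/-- `β` is bounded for the operator norm (inherited from `B(G)`). -/
def BetaNormBounded (J : OperatorTensor E G) (β : ↥J.compactSpan →ₗ[ℂ] ℂ) : Prop :=
  ∃ C : ℝ, ∀ S : J.compactSpan, ‖β S‖ ≤ C * ‖(S : G →L[ℂ] G)‖

/-- A decoherence functional is tensor bounded if its associated functional `β`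
on `K(𝔥) • K(𝔥)` is bounded for the (pre-)C*-norm. -/
def IsTensorBounded (J : OperatorTensor E G)
    (d : (E →L[ℂ] E) → (E →L[ℂ] E) → ℂ) : Prop :=
  ∃ D, IsBoundedBilinear D ∧ ExtendsDF D d ∧
    ∃ β, IsBetaFor J D β ∧ BetaNormBounded J β

/-- `β` is uniformly bounded on the projections `p_ξ`, `ξ` a unit vector of the
algebraic tensor product `𝔥 ⊗_alg 𝔥`. -/
def BetaTraciallyBounded (J : OperatorTensor E G) (β : ↥J.compactSpan →ₗ[ℂ] ℂ) : Prop :=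
  ∃ C : ℝ, ∀ ξ : G, ξ ∈ J.toHilbertTensorProduct.algSpan → ‖ξ‖ = 1 →
    ∀ hm : rankOneProj ξ ∈ J.compactSpan, ‖β ⟨rankOneProj ξ, hm⟩‖ ≤ C

/-- A decoherence functional is tracially bounded if it is bounded and its
associated functional `β` is uniformly bounded on rank one projections `p_ξ`
with `ξ` a unit vector in `𝔥 ⊗_alg 𝔥`. -/
def IsTraciallyBounded (J : OperatorTensor E G)
    (d : (E →L[ℂ] E) → (E →L[ℂ] E) → ℂ) : Prop :=
  DFBounded d ∧ ∃ D, IsBoundedBilinear D ∧ ExtendsDF D d ∧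
    ∃ β, IsBetaFor J D β ∧ BetaTraciallyBounded J β

/-- The rank one operator `z ↦ ⟪η, z⟫ ξ`. -/
def rkOne (ξ η : G) : G →L[ℂ] G := (innerSL ℂ η).smulRight ξ

theorem rkOne_apply (ξ η z : G) : rkOne ξ η z = (⟪η, z⟫ : ℂ) • ξ := by
  simp [rkOne]

theorem rkOne_compact (ξ η : E) : IsCompactOperator (⇑(rkOne ξ η)) := by
  have h : IsCompactOperator (⇑(innerSL ℂ η : E →L[ℂ] ℂ)) := by
    refine ⟨Metric.closedBall 0 1, ?_, ?_⟩
    · exact isCompact_closedBall 0 1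
    · exact ((innerSL ℂ η : E →L[ℂ] ℂ).continuous.continuousAt.preimage_mem_nhds
          (by rw [map_zero]; exact Metric.closedBall_mem_nhds 0 one_pos))
  have h2 := h.clm_comp (ContinuousLinearMap.toSpanSingleton ℂ ξ)
  have e : ⇑(rkOne ξ η) = ⇑(ContinuousLinearMap.toSpanSingleton ℂ ξ) ∘ ⇑(innerSL ℂ η) := by
    funext z; simp [rkOne_apply]
  rw [e]
  exact h2

theorem rkOne_tmul (J : OperatorTensor E G) (a b c e : E) :
    rkOne (J.tmul a b) (J.tmul c e) = J.op (rkOne a c) (rkOne b e) := by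
  apply ContinuousLinearMap.ext_on J.dense_span
  rintro _ ⟨⟨x, y⟩, rfl⟩
  simp only [rkOne_apply, J.op_tmul, J.inner_tmul, map_smul, LinearMap.smul_apply, smul_smul]
  rw [mul_comm]

theorem rkOne_mem (J : OperatorTensor E G) {ξ η : G}
    (hξ : ξ ∈ J.toHilbertTensorProduct.algSpan) (hη : η ∈ J.toHilbertTensorProduct.algSpan) :
    rkOne ξ η ∈ J.compactSpan := by
  induction hξ using Submodule.span_induction with
  | mem x hx =>
    obtain ⟨⟨a, b⟩, rfl⟩ := hx
    induction hη using Submodule.span_induction with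
    | mem y hy =>
      obtain ⟨⟨c, e⟩, rfl⟩ := hy
      exact Submodule.subset_span
        ⟨_, _, rkOne_compact a c, rkOne_compact b e, rkOne_tmul J a b c e⟩
    | zero =>
      convert J.compactSpan.zero_mem using 1
      ext z; simp [rkOne_apply]
    | add y z _ _ hy hz =>
      convert J.compactSpan.add_mem hy hz using 1
      ext w; simp [rkOne_apply, add_smul, inner_add_left]
    | smul r y _ hy =>
      convert J.compactSpan.smul_mem (starRingEnd ℂ r) hy using 1
      ext w; simp [rkOne_apply, smul_smul, mul_comm]
  | zero =>
    convert J.compactSpan.zero_mem using 1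
    ext z; simp [rkOne_apply]
  | add y z _ _ hy hz =>
    convert J.compactSpan.add_mem hy hz using 1
    ext w; simp [rkOne_apply]
  | smul r y _ hy =>
    convert J.compactSpan.smul_mem r hy using 1
    ext w; simp only [rkOne_apply, ContinuousLinearMap.smul_apply]; rw [smul_comm]

theorem traceAlong_rkOne {ι : Type*} (b : HilbertBasis ι ℂ G) (ξ η : G) (T : G →L[ℂ] G) :
    traceAlong b (rkOne ξ η * T) = ⟪η, T ξ⟫ := by
  rw [← ContinuousLinearMap.adjoint_inner_left]
  rw [← (b.hasSum_inner_mul_inner (adjoint T η) ξ).tsum_eq]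
  unfold traceAlong
  congr 1; ext i
  rw [ContinuousLinearMap.mul_apply, rkOne_apply, inner_smul_right,
    ContinuousLinearMap.adjoint_inner_left]

/-- The sesquilinear form attached to `β`. -/
def betaForm (J : OperatorTensor E G) (β : ↥J.compactSpan →ₗ[ℂ] ℂ) :
    J.toHilbertTensorProduct.algSpan →ₗ⋆[ℂ] J.toHilbertTensorProduct.algSpan →ₗ[ℂ] ℂ :=
  LinearMap.mk₂'ₛₗ (starRingEnd ℂ) (RingHom.id ℂ)
    (fun η ξ => β ⟨rkOne (ξ : G) (η : G), rkOne_mem J ξ.2 η.2⟩)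
    (by
      intro x y z; rw [← map_add]; congr 1; ext w
      simp [rkOne_apply, add_smul, inner_add_left])
    (by
      intro c x z; rw [← map_smul]; congr 1; ext w
      simp [rkOne_apply, smul_smul, mul_comm])
    (by
      intro x y z; rw [← map_add]; congr 1; ext w
      simp [rkOne_apply])
    (by
      intro c x z; rw [← map_smul]; congr 1; ext w
      simp [rkOne_apply, smul_smul, mul_comm])

theorem betaForm_apply (J : OperatorTensor E G) (β : ↥J.compactSpan →ₗ[ℂ] ℂ)
    (η ξ : J.toHilbertTensorProduct.algSpan) :
    betaForm J β η ξ = β ⟨rkOne (ξ : G) (η : G), rkOne_mem J ξ.2 η.2⟩ := rfl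

section Form
variable {V : Type u} [NormedAddCommGroup V] [InnerProductSpace ℂ V]

theorem form_diag (f : V →ₗ⋆[ℂ] V →ₗ[ℂ] ℂ) {C : ℝ} (h : ∀ x : V, ‖x‖ = 1 → ‖f x x‖ ≤ C)
    (x : V) : ‖f x x‖ ≤ C * ‖x‖ ^ 2 := by
  by_cases hx : x = 0
  · simp [hx]
  have hn : ‖x‖ ≠ 0 := norm_ne_zero_iff.2 hx
  have h1 := h (((‖x‖⁻¹ : ℝ) : ℂ) • x) (by simp [norm_smul, hn])
  simp only [map_smulₛₗ, LinearMap.smul_apply, norm_smul, smul_eq_mul, norm_mul, RingHom.id_apply,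
    RCLike.norm_conj, Complex.norm_real, norm_inv, norm_norm] at h1
  have h2 : ‖f x x‖ = (‖x‖⁻¹ * (‖x‖⁻¹ * ‖f x x‖)) * ‖x‖ ^ 2 := by field_simp
  rw [h2]; gcongr

theorem form_polar (f : V →ₗ⋆[ℂ] V →ₗ[ℂ] ℂ) {C : ℝ} (h : ∀ x : V, ‖f x x‖ ≤ C * ‖x‖ ^ 2)
    (x y : V) : ‖f x y‖ ≤ C * (‖x‖ ^ 2 + ‖y‖ ^ 2) := by
  have e : 4 * f x y = f (x + y) (x + y) - f (x - y) (x - y)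
      - Complex.I * f (x + Complex.I • y) (x + Complex.I • y)
      + Complex.I * f (x - Complex.I • y) (x - Complex.I • y) := by
    simp only [map_add, map_sub, map_smulₛₗ, LinearMap.add_apply, LinearMap.sub_apply,
      LinearMap.smul_apply, smul_eq_mul, RingHom.id_apply, Complex.conj_I]
    linear_combination (2 * f x y - 2 * f y x) * Complex.I_sq
  have p1 := parallelogram_law_with_norm ℂ x y
  have p2 := parallelogram_law_with_norm ℂ x (Complex.I • y)
  simp only [norm_smul, Complex.norm_I, one_mul] at p2
  have n : 4 * ‖f x y‖ ≤ ‖f (x + y) (x + y)‖ + ‖f (x - y) (x - y)‖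
      + ‖f (x + Complex.I • y) (x + Complex.I • y)‖
      + ‖f (x - Complex.I • y) (x - Complex.I • y)‖ := by
    have : 4 * ‖f x y‖ = ‖4 * f x y‖ := by simp
    rw [this, e]
    refine (norm_add_le _ _).trans (add_le_add ((norm_sub_le _ _).trans
      (add_le_add (norm_sub_le _ _) ?_)) ?_) <;> simp
  have h1 := h (x + y)
  have h2 := h (x - y)
  have h3 := h (x + Complex.I • y)
  have h4 := h (x - Complex.I • y)
  have q1 : C * ‖x + y‖ ^ 2 + C * ‖x - y‖ ^ 2 = C * (2 * (‖x‖ ^ 2 + ‖y‖ ^ 2)) := by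
    linear_combination C * p1
  have q2 : C * ‖x + Complex.I • y‖ ^ 2 + C * ‖x - Complex.I • y‖ ^ 2
      = C * (2 * (‖x‖ ^ 2 + ‖y‖ ^ 2)) := by
    linear_combination C * p2
  linarith

theorem form_bound (f : V →ₗ⋆[ℂ] V →ₗ[ℂ] ℂ) {C : ℝ} (h : ∀ x : V, ‖x‖ = 1 → ‖f x x‖ ≤ C)
    (x y : V) : ‖f x y‖ ≤ 2 * C * ‖y‖ * ‖x‖ := by
  by_cases hx : x = 0
  · simp [hx]
  by_cases hy : y = 0
  · simp [hy]
  have hn : ‖x‖ ≠ 0 := norm_ne_zero_iff.2 hx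
  have hm : ‖y‖ ≠ 0 := norm_ne_zero_iff.2 hy
  have h1 := form_polar f (form_diag f h) (((‖x‖⁻¹ : ℝ) : ℂ) • x) (((‖y‖⁻¹ : ℝ) : ℂ) • y)
  simp only [map_smulₛₗ, LinearMap.smul_apply, norm_smul, smul_eq_mul, norm_mul, RingHom.id_apply,
    RCLike.norm_conj, Complex.norm_real, norm_inv, norm_norm, inv_mul_cancel₀ hn,
    inv_mul_cancel₀ hm] at h1
  have h2 : ‖f x y‖ = (‖y‖⁻¹ * (‖x‖⁻¹ * ‖f x y‖)) * (‖y‖ * ‖x‖) := by field_simp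
  rw [h2]
  calc _ ≤ (C * (1 ^ 2 + 1 ^ 2)) * (‖y‖ * ‖x‖) := by gcongr
    _ = _ := by ring
end Form

theorem form_operator (V : Submodule ℂ G) (hV : Dense (V : Set G))
    (f : V →ₗ⋆[ℂ] V →ₗ[ℂ] ℂ) {C : ℝ} (h : ∀ x y : V, ‖f x y‖ ≤ C * ‖y‖ * ‖x‖) :
    ∃ M : G →L[ℂ] G, ∀ x y : V, (⟪(x : G), M y⟫ : ℂ) = f x y := by
  have key : ∀ y : V, ∃ t : G, (∀ x : V, (⟪(x : G), t⟫ : ℂ) = f x y) ∧ ‖t‖ ≤ |C| * ‖y‖ := by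
    intro y
    let g : V →ₗ[ℂ] ℂ :=
      { toFun := fun x => starRingEnd ℂ (f x y)
        map_add' := by intro a b; simp
        map_smul' := by intro a b; simp }
    have hb : ∀ x, ‖g x‖ ≤ (|C| * ‖y‖) * ‖x‖ := by
      intro x
      have : ‖g x‖ = ‖f x y‖ := RCLike.norm_conj _
      rw [this]
      refine (h x y).trans ?_
      gcongr
      exact le_abs_self C
    obtain ⟨F, hF, hFn⟩ := exists_extension_norm_eq V (g.mkContinuous _ hb)
    refine ⟨(InnerProductSpace.toDual ℂ G).symm F, ?_, ?_⟩
    · intro x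
      rw [← inner_conj_symm, InnerProductSpace.toDual_symm_apply, hF]
      exact Complex.conj_conj _
    · rw [LinearIsometryEquiv.norm_map, hFn]
      exact LinearMap.mkContinuous_norm_le _ (by positivity) _
  choose t ht htn using key
  have uniq : ∀ a b : G, (∀ x : V, (⟪(x : G), a⟫ : ℂ) = ⟪(x : G), b⟫) → a = b := by
    intro a b hab
    exact hV.eq_of_inner_right (𝕜 := ℂ) (fun v hv => hab ⟨v, hv⟩)
  let T : V →ₗ[ℂ] G :=
    { toFun := t
      map_add' := by intro a b; apply uniq; intro x; simp [inner_add_right, ht]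
      map_smul' := by intro a b; apply uniq; intro x; simp [inner_smul_right, ht] }
  let Tc : V →L[ℂ] G := T.mkContinuous |C| htn
  refine ⟨Tc.extend V.subtypeL, ?_⟩
  intro x y
  have hd : DenseRange (V.subtypeL) := by
    simpa [DenseRange] using hV
  have hu : IsUniformInducing (V.subtypeL) := isUniformEmbedding_subtype_val.isUniformInducing
  have := ContinuousLinearMap.extend_eq Tc hd hu y
  have h3 : (Tc.extend V.subtypeL) (y : G) = t y := this
  rw [h3, ht]

/-- Let `d` be a tracially bounded decoherence functional on a
separable Hilbert space of dimension greater than two, with associated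
functional `β` represented by families `{𝔛ᵢ}, {𝔜ᵢ}` of trace class operators.
Then there is a constant `C` with
`|∑ᵢ ⟨(𝔛ᵢ ⊗ 𝔛ᵢ* − 𝔜ᵢ ⊗ 𝔜ᵢ*) ξ, η⟩| ≤ C ‖ξ‖ ‖η‖` for all `ξ, η ∈ 𝔥 ⊗_alg 𝔥`;
consequently there is a bounded operator `𝔐` on `𝔥 ⊗ 𝔥` with
`⟨𝔐 ξ, η⟩ = ∑ᵢ ⟨(𝔛ᵢ ⊗ 𝔛ᵢ* − 𝔜ᵢ ⊗ 𝔜ᵢ*) ξ, η⟩` for all such `ξ, η`. -/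
theorem stmt_15 [TopologicalSpace.SeparableSpace E] (hdim : 2 < Module.rank ℂ E)
    (d : (E →L[ℂ] E) → (E →L[ℂ] E) → ℂ) (hd : IsDecoherenceFunctional d)
    (J : OperatorTensor E G) (htb : IsTraciallyBounded J d)
    (D : (E →L[ℂ] E) →ₗ[ℂ] (E →L[ℂ] E) →ₗ[ℂ] ℂ)
    (hD : IsBoundedBilinear D) (hDd : ExtendsDF D d)
    (β : ↥J.compactSpan →ₗ[ℂ] ℂ) (hβ : IsBetaFor J D β)
    (hβtb : BetaTraciallyBounded J β)
    {I : Type u} (X Y : I → E →L[ℂ] E)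
    (hX : ∀ i, IsTraceClass (X i)) (hY : ∀ i, IsTraceClass (Y i))
    {ιG : Type u} (bG : HilbertBasis ιG ℂ G)
    (hrep : ∀ S : J.compactSpan,
      HasSum (fun i => traceAlong bG ((S : G →L[ℂ] G) *
        (J.op (X i) (adjoint (X i)) - J.op (Y i) (adjoint (Y i))))) (β S)) :
    (∃ C : ℝ, ∀ ξ η : G,
      ξ ∈ J.toHilbertTensorProduct.algSpan → η ∈ J.toHilbertTensorProduct.algSpan →
      Summable (fun i =>
        (⟪η, (J.op (X i) (adjoint (X i)) - J.op (Y i) (adjoint (Y i))) ξ⟫ : ℂ)) ∧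
      ‖∑' i, (⟪η, (J.op (X i) (adjoint (X i)) - J.op (Y i) (adjoint (Y i))) ξ⟫ : ℂ)‖ ≤
        C * ‖ξ‖ * ‖η‖) ∧
    ∃ M : G →L[ℂ] G, ∀ ξ η : G,
      ξ ∈ J.toHilbertTensorProduct.algSpan → η ∈ J.toHilbertTensorProduct.algSpan →
      (⟪η, M ξ⟫ : ℂ) =
        ∑' i, (⟪η, (J.op (X i) (adjoint (X i)) - J.op (Y i) (adjoint (Y i))) ξ⟫ : ℂ) := by
  have hs : ∀ ξ η : G, ∀ hξ : ξ ∈ J.toHilbertTensorProduct.algSpan,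
      ∀ hη : η ∈ J.toHilbertTensorProduct.algSpan,
      HasSum (fun i =>
        (⟪η, (J.op (X i) (adjoint (X i)) - J.op (Y i) (adjoint (Y i))) ξ⟫ : ℂ))
        (betaForm J β ⟨η, hη⟩ ⟨ξ, hξ⟩) := by
    intro ξ η hξ hη
    have := hrep ⟨rkOne ξ η, rkOne_mem J hξ hη⟩
    simp only [traceAlong_rkOne] at this
    exact this
  obtain ⟨C, hC⟩ := hβtb
  have hb := form_bound (betaForm J β) (C := C) (fun x hx => hC x x.2 hx (rkOne_mem J x.2 x.2))
  refine ⟨⟨2 * C, ?_⟩, ?_⟩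
  · intro ξ η hξ hη
    refine ⟨(hs ξ η hξ hη).summable, ?_⟩
    rw [(hs ξ η hξ hη).tsum_eq]
    exact hb ⟨η, hη⟩ ⟨ξ, hξ⟩
  · obtain ⟨M, hM⟩ := form_operator _ J.dense_span (betaForm J β) hb
    refine ⟨M, ?_⟩
    intro ξ η hξ hη
    rw [(hs ξ η hξ hη).tsum_eq]
    exact hM ⟨η, hη⟩ ⟨ξ, hξ⟩
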